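/- Fix ρ ∈ (0,1) and α ∈ (0,1). Let (α_n) be a sequence in (0,1) with n·α_n → α as n → ∞, let c_n be defined by Φ(−c_n) = α_n, and set FWER_n(ρ) = 1 − H_n(ρ, c_n). Then limsup_{n→∞} [ FWER_n(ρ) − ( α_n + (1−ρ)(1 − α_n − (1−α_n)^n) ) ] ≤ 0. -/

import Mathlib

open MeasureTheory Filter

/-- The standard normal density. -/
noncomputable def phi (x : ℝ) : ℝ := (Real.sqrt (2 * Real.pi))⁻¹ * Real.exp (-x ^ 2 / 2)

/-- The standard normal cumulative distribution function. -/
noncomputable def Phi (x : ℝ) : ℝ := ∫ t in Set.Iic x, phi t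

/-- d(ρ,c,z) = (c + √ρ·z)/√(1−ρ). -/
noncomputable def dd (ρ c z : ℝ) : ℝ := (c + Real.sqrt ρ * z) / Real.sqrt (1 - ρ)

/-- G(ρ,c,z) = (c + z/√ρ)/(2(1−ρ)^{3/2}). -/
noncomputable def G (ρ c z : ℝ) : ℝ :=
  (c + z / Real.sqrt ρ) / (2 * (1 - ρ) ^ ((3 : ℝ) / 2))

/-- H_n(ρ,c) = ∫ Φ(d(ρ,c,z))^n φ(z) dz. -/
noncomputable def Hn (n : ℕ) (ρ c : ℝ) : ℝ := ∫ z : ℝ, (Phi (dd ρ c z)) ^ n * phi z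

/-!
Shifting a Gaussian tail outwards by `t > 0` costs a factor `exp (-t * c)`:
`Φ(-(c + t)) ≤ exp (-t * c) Φ(-c)`. If `n Φ(-c n)` stays bounded then `c n → ∞`, and since
`√(1 - ρ) < 1` the conditional threshold `d(ρ, c n, z)` eventually exceeds `c n + 1` for each fixed
`z`. Hence `n Φ(-d(ρ, c n, z)) → 0`, so `Φ(d(ρ, c n, z)) ^ n → 1` and, by dominated convergence, the
family-wise error rate tends to `0`. The line is a convex combination of its nonnegative values at
`ρ = 0` and `ρ = 1`, so subtracting it leaves a nonpositive limsup.
-/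

open ProbabilityTheory Asymptotics Topology

section Gaussian

lemma phi_eq_gaussianPDFReal : phi = gaussianPDFReal 0 1 := by
  ext x
  simp [phi, gaussianPDFReal]

lemma integrable_phi : Integrable phi := by
  rw [phi_eq_gaussianPDFReal]
  exact integrable_gaussianPDFReal 0 1

lemma integral_phi : ∫ x, phi x = 1 := by
  rw [phi_eq_gaussianPDFReal]
  exact integral_gaussianPDFReal_eq_one 0 one_ne_zero

lemma phi_pos (x : ℝ) : 0 < phi x := by
  unfold phi
  positivity

lemma phi_neg (x : ℝ) : phi (-x) = phi x := by
  simp [phi]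

lemma phi_sub (x t : ℝ) : phi (x - t) = Real.exp (t * x - t ^ 2 / 2) * phi x := by
  unfold phi
  rw [mul_left_comm, ← Real.exp_add]
  ring_nf

lemma Phi_eq_cdf : Phi = cdf (gaussianReal 0 1) := by
  ext x
  rw [cdf_eq_real, measureReal_def, gaussianReal_apply_eq_integral 0 one_ne_zero,
    ← phi_eq_gaussianPDFReal, ENNReal.toReal_ofReal, Phi]
  exact integral_nonneg fun t ↦ (phi_pos t).le

lemma monotone_Phi : Monotone Phi :=
  Phi_eq_cdf ▸ monotone_cdf _

lemma Phi_le_one (x : ℝ) : Phi x ≤ 1 :=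
  Phi_eq_cdf ▸ cdf_le_one _ x

lemma Phi_pos (x : ℝ) : 0 < Phi x := by
  have := (gaussianReal_absolutelyContinuous' 0 one_ne_zero).isOpenPosMeasure
  rw [Phi_eq_cdf, cdf_eq_real, measureReal_def]
  refine ENNReal.toReal_pos (Measure.measure_pos_of_nonempty_interior _ ?_).ne' (measure_ne_top _ _)
  simp

lemma Phi_neg (x : ℝ) : Phi (-x) = 1 - Phi x := by
  have hsplit : Phi x + ∫ t in Set.Ioi x, phi t = 1 := by
    rw [← integral_phi]
    exact intervalIntegral.integral_Iic_add_Ioi integrable_phi.integrableOn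
      integrable_phi.integrableOn
  have hreflect : Phi (-x) = ∫ t in Set.Ioi x, phi t := by
    simpa only [Phi, phi_neg, neg_neg] using integral_comp_neg_Iic (-x) phi
  linarith

lemma Phi_sub (a t : ℝ) : Phi (a - t) = ∫ x in Set.Iic a, phi (x - t) := by
  have := (measurePreserving_sub_right volume t).setIntegral_preimage_emb
    (measurableEmbedding_subRight t) phi (Set.Iic (a - t))
  rw [Set.preimage_sub_const_Iic, sub_add_cancel] at this
  exact this.symm

lemma Phi_sub_le {t : ℝ} (ht : 0 ≤ t) (a : ℝ) : Phi (a - t) ≤ Real.exp (t * a) * Phi a := by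
  rw [Phi_sub, Phi, ← integral_const_mul]
  refine setIntegral_mono_on (integrable_phi.comp_sub_right t).integrableOn
    (integrable_phi.const_mul _).integrableOn measurableSet_Iic fun x (hx : x ≤ a) ↦ ?_
  rw [phi_sub]
  gcongr
  · exact (phi_pos x).le
  · linarith [mul_le_mul_of_nonneg_left hx ht, sq_nonneg t]

lemma Phi_comp_isLittleO {ι : Type*} {l : Filter ι} {a b : ι → ℝ} {t : ℝ} (ht : 0 < t)
    (ha : Tendsto a l atBot) (hab : ∀ᶠ i in l, b i ≤ a i - t) :
    (fun i ↦ Phi (b i)) =o[l] fun i ↦ Phi (a i) := by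
  have hle : ∀ᶠ i in l, ‖Phi (b i)‖ ≤ ‖Real.exp (t * a i) * Phi (a i)‖ := by
    filter_upwards [hab] with i hi
    rw [Real.norm_of_nonneg (Phi_pos _).le,
      Real.norm_of_nonneg (mul_nonneg (Real.exp_nonneg _) (Phi_pos _).le)]
    exact (monotone_Phi hi).trans (Phi_sub_le ht.le _)
  have hexp : (fun i ↦ Real.exp (t * a i)) =o[l] fun _ ↦ (1 : ℝ) :=
    (isLittleO_one_iff ℝ).2 (Real.tendsto_exp_atBot.comp (ha.const_mul_atBot ht))
  simpa only [one_mul] using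
    (IsBigO.of_bound' hle).trans_isLittleO (hexp.mul_isBigO (isBigO_refl (fun i ↦ Phi (a i)) l))

lemma tendsto_atBot_of_tendsto_Phi_zero {ι : Type*} {l : Filter ι} {a : ι → ℝ}
    (h : Tendsto (fun i ↦ Phi (a i)) l (𝓝 0)) : Tendsto a l atBot := by
  refine tendsto_atBot.2 fun M ↦ ?_
  filter_upwards [h.eventually_lt_const (Phi_pos M)] with i hi
  exact (monotone_Phi.reflect_lt hi).le

end Gaussian

lemma tendsto_zero_of_natCast_mul_isBigO_one {a : ℕ → ℝ}
    (h : (fun n : ℕ ↦ (n : ℝ) * a n) =O[atTop] fun _ ↦ (1 : ℝ)) : Tendsto a atTop (𝓝 0) := by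
  have hinv : (fun n : ℕ ↦ (n : ℝ)⁻¹) =o[atTop] fun _ ↦ (1 : ℝ) :=
    (isLittleO_one_iff ℝ).2 tendsto_inv_atTop_nhds_zero_nat
  have hprod := hinv.mul_isBigO h
  rw [mul_one, isLittleO_one_iff] at hprod
  refine hprod.congr' ?_
  filter_upwards [eventually_ne_atTop 0] with n hn
  exact inv_mul_cancel_left₀ (Nat.cast_ne_zero.2 hn) _

lemma limsup_sub_le_of_tendsto {ι : Type*} {l : Filter ι} [l.NeBot] {u v : ι → ℝ} {a : ℝ}
    (hu : Tendsto u l (𝓝 a)) (hv_nonneg : ∀ i, 0 ≤ v i) (hv : IsBoundedUnder (· ≤ ·) l v) :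
    limsup (fun i ↦ u i - v i) l ≤ a := by
  have hbelow : IsBoundedUnder (· ≥ ·) l fun i ↦ u i - v i := by
    simp only [sub_eq_add_neg]
    exact isBoundedUnder_ge_add hu.isBoundedUnder_ge (isBoundedUnder_ge_neg.2 hv)
  calc limsup (fun i ↦ u i - v i) l ≤ limsup u l :=
        limsup_le_limsup (Eventually.of_forall fun i ↦ sub_le_self _ (hv_nonneg i))
          hbelow.isCoboundedUnder_le hu.isBoundedUnder_le
    _ = a := hu.limsup_eq

section FWER

lemma tendsto_atTop_of_natCast_mul_Phi_neg_isBigO_one {c : ℕ → ℝ}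
    (h : (fun n : ℕ ↦ (n : ℝ) * Phi (-(c n))) =O[atTop] fun _ ↦ (1 : ℝ)) :
    Tendsto c atTop atTop :=
  tendsto_neg_atBot_iff.1 <|
    tendsto_atBot_of_tendsto_Phi_zero (tendsto_zero_of_natCast_mul_isBigO_one h)

lemma tendsto_Phi_pow_one {c d : ℕ → ℝ} {t : ℝ} (ht : 0 < t)
    (hc : (fun n : ℕ ↦ (n : ℝ) * Phi (-(c n))) =O[atTop] fun _ ↦ (1 : ℝ))
    (hd : ∀ᶠ n in atTop, c n + t ≤ d n) :
    Tendsto (fun n ↦ Phi (d n) ^ n) atTop (𝓝 1) := by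
  have htail : (fun n ↦ Phi (-(d n))) =o[atTop] fun n ↦ Phi (-(c n)) :=
    Phi_comp_isLittleO ht
      (tendsto_neg_atBot_iff.2 (tendsto_atTop_of_natCast_mul_Phi_neg_isBigO_one hc))
      (hd.mono fun n hn ↦ by linarith)
  have hsmall : Tendsto (fun n : ℕ ↦ (n : ℝ) * Phi (-(d n))) atTop (𝓝 0) :=
    (isLittleO_one_iff ℝ).1 (((isBigO_refl _ _).mul_isLittleO htail).trans_isBigO hc)
  have hlim : Tendsto (fun n ↦ (1 + -Phi (-(d n))) ^ n) atTop (𝓝 (Real.exp 0)) :=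
    Real.tendsto_one_add_pow_exp_of_tendsto (by simpa using hsmall.neg)
  simpa [Phi_neg] using hlim

lemma tendsto_dd_sub_self_atTop {ρ : ℝ} (hρ : ρ ∈ Set.Ioo (0 : ℝ) 1) (z : ℝ) :
    Tendsto (fun c ↦ dd ρ c z - c) atTop atTop := by
  have hs : 0 < √(1 - ρ) := Real.sqrt_pos.2 (sub_pos.2 hρ.2)
  have hs' : √(1 - ρ) < 1 := (Real.sqrt_lt' one_pos).2 (by linarith [hρ.1])
  have hslope : 0 < (√(1 - ρ))⁻¹ - 1 := sub_pos.2 ((one_lt_inv₀ hs).2 hs')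
  refine (tendsto_atTop_add_const_right _ (√ρ * z / √(1 - ρ))
    (tendsto_id.const_mul_atTop hslope)).congr fun c ↦ ?_
  simp only [dd, id]
  ring

lemma Hn_eq_integral_gaussianReal (n : ℕ) (ρ c : ℝ) :
    Hn n ρ c = ∫ z, Phi (dd ρ c z) ^ n ∂gaussianReal 0 1 := by
  simp only [Hn, integral_gaussianReal_eq_integral_smul one_ne_zero, ← phi_eq_gaussianPDFReal,
    smul_eq_mul, mul_comm]

lemma tendsto_Hn_one {ρ : ℝ} (hρ : ρ ∈ Set.Ioo (0 : ℝ) 1) {c : ℕ → ℝ}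
    (hc : (fun n : ℕ ↦ (n : ℝ) * Phi (-(c n))) =O[atTop] fun _ ↦ (1 : ℝ)) :
    Tendsto (fun n ↦ Hn n ρ (c n)) atTop (𝓝 1) := by
  have hmeas (n : ℕ) : Measurable fun z ↦ Phi (dd ρ (c n) z) ^ n := by
    have hdd : Measurable (dd ρ (c n)) := by
      unfold dd
      fun_prop
    exact (monotone_Phi.measurable.comp hdd).pow_const n
  have hbound (n : ℕ) (z : ℝ) : ‖Phi (dd ρ (c n) z) ^ n‖ ≤ 1 := by
    rw [Real.norm_of_nonneg (pow_nonneg (Phi_pos _).le n)]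
    exact pow_le_one₀ (Phi_pos _).le (Phi_le_one _)
  have hpointwise (z : ℝ) : Tendsto (fun n ↦ Phi (dd ρ (c n) z) ^ n) atTop (𝓝 1) := by
    refine tendsto_Phi_pow_one one_pos hc ?_
    filter_upwards [((tendsto_dd_sub_self_atTop hρ z).comp
      (tendsto_atTop_of_natCast_mul_Phi_neg_isBigO_one hc)).eventually_ge_atTop 1] with n hn
    exact le_sub_iff_add_le'.1 hn
  simpa [Hn_eq_integral_gaussianReal] using
    tendsto_integral_of_dominated_convergence (μ := gaussianReal 0 1) (fun _ ↦ 1)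
      (fun n ↦ (hmeas n).aestronglyMeasurable) (integrable_const 1)
      (fun n ↦ ae_of_all _ (hbound n)) (ae_of_all _ hpointwise)

lemma FWER_line_mem_Icc {ρ a : ℝ} (hρ : ρ ∈ Set.Icc (0 : ℝ) 1) (ha : a ∈ Set.Icc (0 : ℝ) 1)
    (n : ℕ) : a + (1 - ρ) * (1 - a - (1 - a) ^ n) ∈ Set.Icc (0 : ℝ) 1 := by
  have ha' : 1 - a ∈ Set.Icc (0 : ℝ) 1 := Set.Icc.one_sub_mem ha
  have hpow : 1 - (1 - a) ^ n ∈ Set.Icc (0 : ℝ) 1 :=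
    Set.Icc.one_sub_mem ⟨pow_nonneg ha'.1 n, pow_le_one₀ ha'.1 ha'.2⟩
  have hconvex := convex_Icc (0 : ℝ) 1 ha hpow hρ.1 (sub_nonneg.2 hρ.2) (add_sub_cancel ρ 1)
  convert hconvex using 1
  simp only [smul_eq_mul]
  ring

end FWER

theorem limsup_FWER_minus_line_nonpos_general
    (ρ : ℝ) (hρ : ρ ∈ Set.Ioo (0 : ℝ) 1) (αseq : ℕ → ℝ)
    (hbdd : (fun n : ℕ ↦ (n : ℝ) * αseq n) =O[atTop] fun _ ↦ (1 : ℝ))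
    (c : ℕ → ℝ) (hc : ∀ n, Phi (-(c n)) = αseq n) :
    limsup (fun n : ℕ ↦
        (1 - Hn n ρ (c n)) - (αseq n + (1 - ρ) * (1 - αseq n - (1 - αseq n) ^ n)))
      atTop ≤ 0 := by
  obtain rfl : (fun n ↦ Phi (-(c n))) = αseq := funext hc
  have hFWER : Tendsto (fun n ↦ 1 - Hn n ρ (c n)) atTop (𝓝 0) := by
    simpa using (tendsto_Hn_one hρ hbdd).const_sub 1
  have hline (n : ℕ) :=
    FWER_line_mem_Icc (Set.Ioo_subset_Icc_self hρ) ⟨(Phi_pos (-(c n))).le, Phi_le_one _⟩ n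
  exact limsup_sub_le_of_tendsto hFWER (fun n ↦ (hline n).1)
    (isBoundedUnder_of ⟨1, fun n ↦ (hline n).2⟩)

theorem limsup_FWER_minus_line_nonpos
    (ρ : ℝ) (hρ : ρ ∈ Set.Ioo (0:ℝ) 1) (α : ℝ) (hα : α ∈ Set.Ioo (0:ℝ) 1)
    (αseq : ℕ → ℝ) (hαseq : ∀ n, αseq n ∈ Set.Ioo (0:ℝ) 1)
    (hlim : Tendsto (fun n : ℕ => (n : ℝ) * αseq n) atTop (nhds α))
    (c : ℕ → ℝ) (hc : ∀ n, Phi (-(c n)) = αseq n) :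
    limsup (fun n : ℕ =>
        (1 - Hn n ρ (c n)) - (αseq n + (1 - ρ) * (1 - αseq n - (1 - αseq n) ^ n)))
      atTop ≤ 0 :=
  limsup_FWER_minus_line_nonpos_general ρ hρ αseq (hlim.isBigO_one ℝ) c hc
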